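/- arXiv:math-ph/0201008 — 2 statements merged into one kernel-verified Lean document; each statement's English description precedes it below -/
import Mathlib

section
/- Let ω > 0 and let f : ℝ → ℝ be given by a finite Fourier series f(t) = Σ_{n∈ℤ} F_n e^{inωt} (only finitely many F_n nonzero, f real-valued). Set Q₀(t) = exp(2i·∫₀ᵗ f(τ) dτ) and, assuming the mean values M(Q₀) and M(conj Q₀) exist, set Q₁(t) = Q₀(t)·∫₀ᵗ (conj(Q₀(τ)) − M(conj Q₀)) dτ. Assume that either (I) M(Q₀) ≠ 0, or (II) M(Q₀) = 0 and the mean value M(Q₁) exists with M(Q₁) ≠ 0. Then there exists K > 0 such that for every real ε with |ε| < K the following holds: letting U : ℝ → Matrix 2×2 ℂ be the propagator, i.e., the unique solution of U'(t) = −i·(ε·σ₁ + f(t)·σ₃)·U(t) with U(0) = Id, there exist Ω ∈ ℝ and sequences 𝒰₁₁⁻, 𝒰₁₁⁺, 𝒰₁₂⁻, 𝒰₁₂⁺ : ℤ → ℂ, each absolutely summable, such that for all t ∈ ℝ: U₁₁(t) = e^{−iΩt}·Σ_{n∈ℤ} 𝒰₁₁⁻(n) e^{inωt} + e^{iΩt}·Σ_{n∈ℤ}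 𝒰₁₁⁺(n) e^{inωt}, U₁₂(t) = e^{−iΩt}·Σ_{n∈ℤ} 𝒰₁₂⁻(n) e^{inωt} + e^{iΩt}·Σ_{n∈ℤ} 𝒰₁₂⁺(n) e^{inωt}, U₂₁(t) = −conj(U₁₂(t)) and U₂₂(t) = conj(U₁₁(t)). -/
open Matrix Filter

noncomputable section

/-- The mean value `M(h)` of a function `h : ℝ → ℂ`:
`M(h) = L` iff `(1/(2T)) ∫_{-T}^{T} h(t) dt → L` as `T → +∞`. -/
def MeanValueIs (h : ℝ → ℂ) (L : ℂ) : Prop :=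
  Tendsto (fun T : ℝ => (1 / (2 * T)) • ∫ t in (-T)..T, h t) atTop (nhds L)

/-!
The generator `-i (ε σ₁ + f σ₃)` is traceless and skew-adjoint, so its propagator `U` takes
values in `SU(2)`. The generator has period `T = 2π/ω`, so `U (t + T) = U t * U T`. The monodromy
matrix `U T` has eigenvalues `exp (± i Ω T)` for some real `Ω`, and `U T * S = S * D` with `S`
invertible and `D` diagonal. The columns of `U t * S` are then `exp (± i Ω t)` times `T`-periodic
`C¹` functions, whose Fourier series converge absolutely; multiplying by `S⁻¹` gives the
expansion of `U`.
-/

open MeasureTheory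
open scoped Real

section FourierSeries

theorem summable_fourierCoeffOn_of_hasDerivAt {a b : ℝ} (hab : a < b) {f f' : ℝ → ℂ}
    (hff' : ∀ x ∈ Set.uIcc a b, HasDerivAt f (f' x) x)
    (hf' : MemLp f' 2 (volume.restrict (Set.Ioc a b))) (hfab : f b = f a) :
    Summable (fourierCoeffOn hab f) := by
  have hint : IntervalIntegrable f' volume a b :=
    (intervalIntegrable_iff_integrableOn_Ioc_of_le hab.le).2 (hf'.integrable one_le_two)
  have hsq : Summable fun n : ℤ => 1 / (n : ℝ) ^ 2 + ‖fourierCoeffOn hab f' n‖ ^ 2 :=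
    (Real.summable_one_div_int_pow.2 one_lt_two).add (hasSum_sq_fourierCoeffOn hab hf').summable
  refine .of_norm_bounded_eventually (hsq.mul_left ((b - a) / (4 * π))) ?_
  filter_upwards [eventually_cofinite_ne 0] with n hn
  have hnorm : ‖fourierCoeffOn hab f n‖ =
      (b - a) / (4 * π) * (2 * (1 / |(n : ℝ)|) * ‖fourierCoeffOn hab f' n‖) := by
    rw [fourierCoeffOn_of_hasDerivAt hab hn hff' hint, hfab, sub_self, mul_zero, zero_sub,
      ← Complex.ofReal_sub]
    simp only [norm_mul, norm_div, norm_neg, norm_one, Complex.norm_I, Complex.norm_real,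
      Complex.norm_intCast, Complex.norm_ofNat, Real.norm_eq_abs, abs_of_pos Real.pi_pos,
      abs_of_pos (sub_pos.2 hab)]
    field_simp
    ring
  rw [hnorm, ← sq_abs (n : ℝ), ← _root_.one_div_pow]
  have := sub_pos.2 hab
  gcongr
  exact two_mul_le_add_sq _ _

/-- `h` is the sum of the absolutely convergent Fourier series with frequency `ω` and
coefficients `u`. -/
structure HasAbsFourierSeries (ω : ℝ) (u : ℤ → ℂ) (h : ℝ → ℂ) : Prop where
  summable_norm : Summable fun n => ‖u n‖
  eq_tsum (t : ℝ) : h t = ∑' n : ℤ, u n * Complex.exp (Complex.I * n * ω * t)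

theorem HasAbsFourierSeries.mul_const {ω : ℝ} {u : ℤ → ℂ} {h : ℝ → ℂ}
    (hu : HasAbsFourierSeries ω u h) (c : ℂ) :
    HasAbsFourierSeries ω (fun n => u n * c) (fun t => h t * c) where
  summable_norm := by simpa only [norm_mul] using hu.summable_norm.mul_right ‖c‖
  eq_tsum t := by simp only [hu.eq_tsum t, ← tsum_mul_right, mul_right_comm]

theorem exists_hasAbsFourierSeries_of_periodic {ω : ℝ} (hω : 0 < ω) {h : ℝ → ℂ}
    (hper : Function.Periodic h (2 * π / ω)) (hdiff : ContDiff ℝ 1 h) :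
    ∃ u, HasAbsFourierSeries ω u h := by
  have hT : 0 < 2 * π / ω := by positivity
  have : Fact (0 < 2 * π / ω) := ⟨hT⟩
  let H : C(AddCircle (2 * π / ω), ℂ) := ⟨hper.lift, hdiff.continuous.quotient_lift _⟩
  have hab : 0 < 0 + 2 * π / ω := by rwa [zero_add]
  have hcoeff : fourierCoeff H = fourierCoeffOn hab h := by
    ext n
    rw [fourierCoeff_eq_intervalIntegral _ _ 0, fourierCoeffOn_eq_integral, add_sub_cancel_left]
    rfl
  have hcont := hdiff.continuous_deriv_one
  have hderiv : MemLp (deriv h) 2 (volume.restrict (Set.Ioc 0 (0 + 2 * π / ω))) :=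
    (memLp_two_iff_integrable_sq_norm hcont.aestronglyMeasurable).2
      (hcont.norm.pow 2).integrableOn_Ioc
  have hsum : Summable (fourierCoeff H) := hcoeff ▸ summable_fourierCoeffOn_of_hasDerivAt hab
    (fun x _ => (hdiff.differentiable_one x).hasDerivAt) hderiv (hper 0)
  refine ⟨fourierCoeff H, hsum.norm, fun t => ?_⟩
  refine (has_pointwise_sum_fourier_series_of_summable hsum t).tsum_eq.symm.trans ?_
  refine tsum_congr fun n => ?_
  rw [fourier_coe_apply, smul_eq_mul]
  congr 2
  push_cast
  field_simp

theorem exists_hasAbsFourierSeries_of_quasiperiodic {ω : ℝ} (hω : 0 < ω) {g : ℝ → ℂ} {Ω : ℝ}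
    (hdiff : ContDiff ℝ 1 g)
    (hg : ∀ t, g (t + 2 * π / ω) = g t * Complex.exp (Complex.I * Ω * (2 * π / ω : ℝ))) :
    ∃ u, HasAbsFourierSeries ω u (fun t => Complex.exp (-(Complex.I * Ω * t)) * g t) := by
  refine exists_hasAbsFourierSeries_of_periodic hω (fun t => ?_) ?_
  · rw [hg, mul_comm (g t), ← mul_assoc, ← Complex.exp_add]
    congr 2
    push_cast
    ring
  · have : ContDiff ℝ 1 (fun t : ℝ => (t : ℂ)) := Complex.ofRealCLM.contDiff
    fun_prop

theorem periodic_finsum_exp {ω : ℝ} (hω : ω ≠ 0) (F : ℤ → ℂ) :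
    Function.Periodic (fun t : ℝ => ∑ᶠ n : ℤ, F n * Complex.exp (Complex.I * n * ω * t))
      (2 * π / ω) := by
  intro t
  refine finsum_congr fun n => congrArg (F n * ·) (Complex.exp_eq_exp_iff_exists_int.2 ⟨n, ?_⟩)
  have : (ω : ℂ) ≠ 0 := Complex.ofReal_ne_zero.2 hω
  push_cast
  field_simp

theorem continuous_finsum_exp {F : ℤ → ℂ} (hF : {n | F n ≠ 0}.Finite) (ω : ℝ) :
    Continuous fun t : ℝ => ∑ᶠ n : ℤ, F n * Complex.exp (Complex.I * n * ω * t) := by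
  have hsum (t : ℝ) : ∑ᶠ n : ℤ, F n * Complex.exp (Complex.I * n * ω * t) =
      ∑ n ∈ hF.toFinset, F n * Complex.exp (Complex.I * n * ω * t) :=
    finsum_eq_sum_of_support_subset _ fun n hn => by simpa using left_ne_zero_of_mul hn
  simp only [hsum]
  fun_prop

end FourierSeries

section Propagator

/-- `U` is the propagator (principal fundamental solution at time `0`) of the linear equation
`X' = A X`. The algebra is only assumed topological, since matrices carry no canonical norm. -/
structure IsPropagator {𝔸 : Type*} [Ring 𝔸] [Module ℝ 𝔸] [TopologicalSpace 𝔸]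
    [ContinuousSMul ℝ 𝔸] (A U : ℝ → 𝔸) : Prop where
  map_zero : U 0 = 1
  hasDerivAt (t : ℝ) : HasDerivAt U (A t * U t) t

namespace IsPropagator

section StarAlgebra

variable {𝔸 : Type*} [NormedRing 𝔸] [StarRing 𝔸] [NormedAlgebra ℝ 𝔸] [StarModule ℝ 𝔸]
  [ContinuousStar 𝔸] {A U X : ℝ → 𝔸}

theorem star_mul_eq_of_skewAdjoint (hU : IsPropagator A U) (hA : ∀ t, A t ∈ skewAdjoint 𝔸)
    (hX : ∀ t, HasDerivAt X (A t * X t) t) (t : ℝ) : star (U t) * X t = X 0 := by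
  have hderiv (s : ℝ) : HasDerivAt (fun r => star (U r) * X r) 0 s := by
    refine ((hU.hasDerivAt s).star.mul (hX s)).congr_deriv ?_
    rw [star_mul, skewAdjoint.mem_iff.1 (hA s)]
    noncomm_ring
  simpa [hU.map_zero] using is_const_of_deriv_eq_zero
    (fun s => (hderiv s).differentiableAt) (fun s => (hderiv s).deriv) t 0

theorem mem_unitary [IsDedekindFiniteMonoid 𝔸] (hU : IsPropagator A U)
    (hA : ∀ t, A t ∈ skewAdjoint 𝔸) (t : ℝ) : U t ∈ unitary 𝔸 := by
  have h : star (U t) * U t = 1 :=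
    (hU.star_mul_eq_of_skewAdjoint hA hU.hasDerivAt t).trans hU.map_zero
  exact ⟨h, mul_eq_one_symm h⟩

theorem eq_mul_apply_zero [IsDedekindFiniteMonoid 𝔸] (hU : IsPropagator A U)
    (hA : ∀ t, A t ∈ skewAdjoint 𝔸) (hX : ∀ t, HasDerivAt X (A t * X t) t) (t : ℝ) :
    X t = U t * X 0 := by
  rw [← hU.star_mul_eq_of_skewAdjoint hA hX t, ← mul_assoc, (hU.mem_unitary hA t).2, one_mul]

theorem apply_add_period [IsDedekindFiniteMonoid 𝔸] (hU : IsPropagator A U)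
    (hA : ∀ t, A t ∈ skewAdjoint 𝔸) {T : ℝ} (hT : Function.Periodic A T) (t : ℝ) :
    U (t + T) = U t * U T := by
  have hshift (s : ℝ) : HasDerivAt (fun r => U (r + T)) (A s * U (s + T)) s := by
    simpa only [hT s] using (hU.hasDerivAt (s + T)).comp_add_const s T
  simpa only [zero_add] using hU.eq_mul_apply_zero hA hshift t

end StarAlgebra

section Matrix

variable {n : Type*} [Fintype n] [DecidableEq n] {A U : ℝ → Matrix n n ℂ}

theorem hasDerivAt_apply (hU : IsPropagator A U) (t : ℝ) (i j : n) :
    HasDerivAt (fun s => U s i j) ((A t * U t) i j) t :=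
  hasDerivAt_pi.1 (hasDerivAt_pi.1 (hU.hasDerivAt t) i) j

theorem of_hasDerivAt_apply (h₀ : U 0 = 1)
    (h : ∀ t i j, HasDerivAt (fun s => U s i j) ((A t * U t) i j) t) : IsPropagator A U :=
  ⟨h₀, fun t => hasDerivAt_pi.2 fun i => hasDerivAt_pi.2 (h t i)⟩

theorem contDiff_apply (hU : IsPropagator A U) (hA : Continuous A) (i j : n) :
    ContDiff ℝ 1 fun t => U t i j := by
  have hcont : Continuous U := continuous_matrix fun i j =>
    continuous_iff_continuousAt.2 fun t => (hU.hasDerivAt_apply t i j).continuousAt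
  refine contDiff_one_iff_deriv.2
    ⟨fun t => (hU.hasDerivAt_apply t i j).differentiableAt, ?_⟩
  rw [funext fun t => (hU.hasDerivAt_apply t i j).deriv]
  exact (hA.matrix_mul hcont).matrix_elem i j

end Matrix

section FinTwo

variable {A U : ℝ → Matrix (Fin 2) (Fin 2) ℂ}

theorem det_eq_one_of_trace_eq_zero (hU : IsPropagator A U)
    (hA : ∀ t, (A t).trace = 0) (t : ℝ) : (U t).det = 1 := by
  have hderiv (s : ℝ) : HasDerivAt (fun r => (U r).det) 0 s := by
    have hd := hU.hasDerivAt_apply s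
    have htr := hA s
    simp only [det_fin_two]
    refine (((hd 0 0).mul (hd 1 1)).sub ((hd 0 1).mul (hd 1 0))).congr_deriv ?_
    simp only [trace_fin_two, mul_apply, Fin.sum_univ_two] at htr ⊢
    linear_combination (U s 0 0 * U s 1 1 - U s 0 1 * U s 1 0) * htr
  simpa [hU.map_zero] using is_const_of_deriv_eq_zero
    (fun s => (hderiv s).differentiableAt) (fun s => (hderiv s).deriv) t 0

theorem mem_specialUnitaryGroup (hU : IsPropagator A U)
    (hA : ∀ t, A t ∈ skewAdjoint (Matrix (Fin 2) (Fin 2) ℂ)) (htr : ∀ t, (A t).trace = 0)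
    (t : ℝ) : U t ∈ specialUnitaryGroup (Fin 2) ℂ :=
  ⟨open scoped Matrix.Norms.L2Operator in hU.mem_unitary hA t,
    hU.det_eq_one_of_trace_eq_zero htr t⟩

end FinTwo

end IsPropagator

end Propagator

section SpecialUnitary

theorem adjugate_eq_conjTranspose_of_mem_specialUnitaryGroup {n R : Type*} [Fintype n]
    [DecidableEq n] [CommRing R] [StarRing R] {V : Matrix n n R}
    (hV : V ∈ specialUnitaryGroup n R) : V.adjugate = Vᴴ := by
  obtain ⟨⟨hstar, -⟩, hdet⟩ := mem_specialUnitaryGroup_iff.1 hV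
  calc V.adjugate = star V * V * V.adjugate := by rw [hstar, one_mul]
    _ = Vᴴ := by rw [mul_assoc, mul_adjugate, hdet, one_smul, mul_one, star_eq_conjTranspose]

theorem apply_one_zero_of_mem_specialUnitaryGroup {R : Type*} [CommRing R] [StarRing R]
    {V : Matrix (Fin 2) (Fin 2) R} (hV : V ∈ specialUnitaryGroup (Fin 2) R) :
    V 1 0 = -star (V 0 1) := by
  have h := congr_fun₂ (adjugate_eq_conjTranspose_of_mem_specialUnitaryGroup hV) 1 0
  rw [← conjTranspose_apply, ← h, adjugate_fin_two]
  simp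

theorem apply_one_one_of_mem_specialUnitaryGroup {R : Type*} [CommRing R] [StarRing R]
    {V : Matrix (Fin 2) (Fin 2) R} (hV : V ∈ specialUnitaryGroup (Fin 2) R) :
    V 1 1 = star (V 0 0) := by
  have h := congr_fun₂ (adjugate_eq_conjTranspose_of_mem_specialUnitaryGroup hV) 0 0
  rw [← conjTranspose_apply, ← h, adjugate_fin_two]
  simp

/-- `SU(2)` commutes with the antiunitary map `(v₀, v₁) ↦ (conj v₁, -conj v₀)`. -/
theorem mulVec_star_swap_of_mem_specialUnitaryGroup {R : Type*} [CommRing R] [StarRing R]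
    {V : Matrix (Fin 2) (Fin 2) R} (hV : V ∈ specialUnitaryGroup (Fin 2) R) {v : Fin 2 → R} {c : R}
    (hv : V *ᵥ v = c • v) :
    V *ᵥ ![star (v 1), -star (v 0)] = star c • ![star (v 1), -star (v 0)] := by
  have h₀ := congr_arg star (congr_fun hv 0)
  have h₁ := congr_arg star (congr_fun hv 1)
  simp only [mulVec, dotProduct, Fin.sum_univ_two, Pi.smul_apply, smul_eq_mul, star_add, star_mul',
    apply_one_zero_of_mem_specialUnitaryGroup hV, apply_one_one_of_mem_specialUnitaryGroup hV,
    star_neg, star_star] at h₀ h₁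
  ext i
  fin_cases i
  · simp only [mulVec, dotProduct, Fin.sum_univ_two, Pi.smul_apply, smul_eq_mul, Fin.zero_eta,
      cons_val_zero, cons_val_one]
    linear_combination h₁
  · simp only [mulVec, dotProduct, Fin.sum_univ_two, Pi.smul_apply, smul_eq_mul, Fin.mk_one,
      cons_val_zero, cons_val_one, apply_one_zero_of_mem_specialUnitaryGroup hV,
      apply_one_one_of_mem_specialUnitaryGroup hV]
    linear_combination -h₀

theorem exists_diagonalization_of_mem_specialUnitaryGroup {V : Matrix (Fin 2) (Fin 2) ℂ}
    (hV : V ∈ specialUnitaryGroup (Fin 2) ℂ) :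
    ∃ (θ : ℝ) (S : Matrix (Fin 2) (Fin 2) ℂ), IsUnit S.det ∧
      V * S = S * diagonal ![Complex.exp (-(Complex.I * θ)), Complex.exp (Complex.I * θ)] := by
  obtain ⟨c, hc⟩ := Module.End.exists_eigenvalue V.toLin'
  obtain ⟨v, hv⟩ := hc.exists_hasEigenvector
  have hVv : V *ᵥ v = c • v := hv.apply_eq_smul
  let w : Fin 2 → ℂ := ![star (v 1), -star (v 0)]
  have hVw : V *ᵥ w = star c • w := mulVec_star_swap_of_mem_specialUnitaryGroup hV hVv
  let S : Matrix (Fin 2) (Fin 2) ℂ := (of ![w, v])ᵀ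
  have hVS : V * S = S * diagonal ![star c, c] := by
    ext i j
    rw [mul_diagonal, mul_comm]
    fin_cases j
    · exact congr_fun hVw i
    · exact congr_fun hVv i
  have hS : S.det ≠ 0 := by
    have : S.det = star v ⬝ᵥ v := by
      simp [S, w, det_fin_two, dotProduct, Fin.sum_univ_two, add_comm]
    rw [this]
    open scoped ComplexOrder in exact dotProduct_star_self_eq_zero.not.2 hv.2
  have hnorm : ‖c‖ = 1 := by
    have hdet : S.det * (star c * c) = S.det * 1 := by
      simpa [mem_specialUnitaryGroup_iff.1 hV |>.2] using (congr_arg det hVS).symm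
    rw [← sq_eq_sq₀ (norm_nonneg c) zero_le_one, one_pow]
    exact_mod_cast (Complex.conj_mul' c).symm.trans (mul_left_cancel₀ hS hdet)
  obtain ⟨θ, rfl⟩ := (Complex.norm_eq_one_iff c).1 hnorm
  refine ⟨θ, S, hS.isUnit, ?_⟩
  rw [hVS, mul_comm (θ : ℂ)]
  congr
  simp [← Complex.exp_conj]

end SpecialUnitary

theorem exists_floquet_expansion {ι : Type*} [Fintype ι] [DecidableEq ι] {ω : ℝ} (hω : 0 < ω)
    {U : ℝ → Matrix ι ι ℂ} {V S : Matrix ι ι ℂ} {Ω : ι → ℝ}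
    (hdiff : ∀ i j, ContDiff ℝ 1 fun t => U t i j) (hU : ∀ t, U (t + 2 * π / ω) = U t * V)
    (hS : IsUnit S.det)
    (hVS : V * S = S * diagonal fun k => Complex.exp (Complex.I * Ω k * (2 * π / ω : ℝ)))
    (i j : ι) :
    ∃ u : ι → ℤ → ℂ, (∀ k, Summable fun n => ‖u k n‖) ∧
      ∀ t, U t i j = ∑ k, Complex.exp (Complex.I * Ω k * t) *
        ∑' n : ℤ, u k n * Complex.exp (Complex.I * n * ω * t) := by
  let W (t : ℝ) : Matrix ι ι ℂ := U t * S
  have hW (k : ι) (t : ℝ) : W (t + 2 * π / ω) i k =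
      W t i k * Complex.exp (Complex.I * Ω k * (2 * π / ω : ℝ)) := by
    simp only [W]
    rw [hU, mul_assoc, hVS, ← mul_assoc, mul_diagonal]
  have hWdiff (k : ι) : ContDiff ℝ 1 fun t => W t i k := by
    simp only [W, mul_apply]
    fun_prop
  choose u hu using fun k => exists_hasAbsFourierSeries_of_quasiperiodic hω (hWdiff k) (hW k)
  refine ⟨fun k n => u k n * S⁻¹ k j, fun k => ((hu k).mul_const _).summable_norm, fun t => ?_⟩
  calc U t i j = (W t * S⁻¹) i j := by rw [mul_assoc, mul_nonsing_inv _ hS, mul_one]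
    _ = ∑ k, W t i k * S⁻¹ k j := mul_apply
    _ = _ := Finset.sum_congr rfl fun k _ => by
      rw [← ((hu k).mul_const _).eq_tsum t, ← mul_assoc, ← mul_assoc, ← Complex.exp_add,
        add_neg_cancel, Complex.exp_zero, one_mul]

/-- The Hamiltonian `ε σ₁ + x σ₃` of a two-level system with driving field `x`. -/
def twoLevelHamiltonian (ε x : ℝ) : Matrix (Fin 2) (Fin 2) ℂ :=
  (ε : ℂ) • !![0, 1; 1, 0] + (x : ℂ) • !![1, 0; 0, -1]

theorem isHermitian_twoLevelHamiltonian (ε x : ℝ) : (twoLevelHamiltonian ε x).IsHermitian := by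
  ext i j
  fin_cases i <;> fin_cases j <;> simp [twoLevelHamiltonian]

theorem trace_twoLevelHamiltonian (ε x : ℝ) : (twoLevelHamiltonian ε x).trace = 0 := by
  simp [twoLevelHamiltonian, trace_fin_two]

theorem continuous_twoLevelHamiltonian (ε : ℝ) : Continuous (twoLevelHamiltonian ε) := by
  unfold twoLevelHamiltonian
  fun_prop

theorem floquet_form_conditions_I_II_general {ω : ℝ} (hω : 0 < ω)
    {H U : ℝ → Matrix (Fin 2) (Fin 2) ℂ} (hcont : Continuous H)
    (hper : Function.Periodic H (2 * π / ω)) (hherm : ∀ t, (H t).IsHermitian)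
    (htr : ∀ t, (H t).trace = 0) (hU : IsPropagator (fun t => -Complex.I • H t) U) :
    ∃ Ω : ℝ, ∃ u11m u11p u12m u12p : ℤ → ℂ,
      Summable (fun n : ℤ => ‖u11m n‖) ∧ Summable (fun n : ℤ => ‖u11p n‖) ∧
      Summable (fun n : ℤ => ‖u12m n‖) ∧ Summable (fun n : ℤ => ‖u12p n‖) ∧
      ∀ t : ℝ,
        U t 0 0 =
          Complex.exp (-Complex.I * Ω * t) *
            (∑' n : ℤ, u11m n * Complex.exp (Complex.I * n * ω * t))
          + Complex.exp (Complex.I * Ω * t) *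
            (∑' n : ℤ, u11p n * Complex.exp (Complex.I * n * ω * t)) ∧
        U t 0 1 =
          Complex.exp (-Complex.I * Ω * t) *
            (∑' n : ℤ, u12m n * Complex.exp (Complex.I * n * ω * t))
          + Complex.exp (Complex.I * Ω * t) *
            (∑' n : ℤ, u12p n * Complex.exp (Complex.I * n * ω * t)) ∧
        U t 1 0 = -(starRingEnd ℂ) (U t 0 1) ∧
        U t 1 1 = (starRingEnd ℂ) (U t 0 0) := by
  have hskew (t : ℝ) : -Complex.I • H t ∈ skewAdjoint (Matrix (Fin 2) (Fin 2) ℂ) := by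
    simp [skewAdjoint.mem_iff, star_eq_conjTranspose, (hherm t).eq]
  have hSU := hU.mem_specialUnitaryGroup hskew (by simp [htr])
  have hfloquet : ∀ t, U (t + 2 * π / ω) = U t * U (2 * π / ω) :=
    open scoped Matrix.Norms.L2Operator in
    hU.apply_add_period hskew fun t => congrArg (-Complex.I • ·) (hper t)
  obtain ⟨θ, S, hS, hVS⟩ := exists_diagonalization_of_mem_specialUnitaryGroup (hSU (2 * π / ω))
  let Ω : ℝ := θ / (2 * π / ω)
  have hΩ : diagonal ![Complex.exp (-(Complex.I * θ)), Complex.exp (Complex.I * θ)] =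
      diagonal fun k => Complex.exp (Complex.I * ![-Ω, Ω] k * (2 * π / ω : ℝ)) := by
    have : (ω : ℂ) ≠ 0 := Complex.ofReal_ne_zero.2 hω.ne'
    congr with k
    fin_cases k <;> simp [Ω] <;> field_simp
  have hexp := exists_floquet_expansion hω
    (hU.contDiff_apply (hcont.const_smul (-Complex.I))) hfloquet hS (hΩ ▸ hVS)
  obtain ⟨u, hu, hUu⟩ := hexp 0 0
  obtain ⟨v, hv, hUv⟩ := hexp 0 1
  refine ⟨Ω, u 0, u 1, v 0, v 1, hu 0, hu 1, hv 0, hv 1, fun t => ⟨?_, ?_,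
    apply_one_zero_of_mem_specialUnitaryGroup (hSU t),
    apply_one_one_of_mem_specialUnitaryGroup (hSU t)⟩⟩
  · simpa [Fin.sum_univ_two] using hUu t
  · simpa [Fin.sum_univ_two] using hUv t

theorem floquet_form_conditions_I_II
    (ω : ℝ) (hω : 0 < ω)
    (F : ℤ → ℂ) (hFfin : {n : ℤ | F n ≠ 0}.Finite)
    (f : ℝ → ℝ)
    (hf : ∀ t : ℝ, (f t : ℂ) = ∑ᶠ n : ℤ, F n * Complex.exp (Complex.I * (n : ℂ) * (ω : ℂ) * (t : ℂ)))
    (Q₀ Q₁ : ℝ → ℂ)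
    (hQ₀ : ∀ t : ℝ, Q₀ t = Complex.exp (2 * Complex.I * ∫ τ in (0:ℝ)..t, (f τ : ℂ)))
    (M₀ Mc : ℂ)
    (hM₀ : MeanValueIs Q₀ M₀)
    (hMc : MeanValueIs (fun t => (starRingEnd ℂ) (Q₀ t)) Mc)
    (hQ₁ : ∀ t : ℝ, Q₁ t = Q₀ t * ∫ τ in (0:ℝ)..t, ((starRingEnd ℂ) (Q₀ τ) - Mc))
    (hcond : M₀ ≠ 0 ∨ (M₀ = 0 ∧ ∃ M₁ : ℂ, MeanValueIs Q₁ M₁ ∧ M₁ ≠ 0)) :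
    ∃ K : ℝ, 0 < K ∧ ∀ ε : ℝ, |ε| < K →
      ∀ U : ℝ → Matrix (Fin 2) (Fin 2) ℂ,
        U 0 = 1 →
        (∀ t : ℝ, ∀ i j : Fin 2, HasDerivAt (fun s => U s i j)
          (((-Complex.I) • (((ε : ℂ) • (!![0, 1; 1, 0] : Matrix (Fin 2) (Fin 2) ℂ)
            + (f t : ℂ) • (!![1, 0; 0, -1] : Matrix (Fin 2) (Fin 2) ℂ)) * U t)) i j) t) →
        ∃ Ω : ℝ, ∃ u11m u11p u12m u12p : ℤ → ℂ,
          Summable (fun n : ℤ => ‖u11m n‖) ∧ Summable (fun n : ℤ => ‖u11p n‖) ∧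
          Summable (fun n : ℤ => ‖u12m n‖) ∧ Summable (fun n : ℤ => ‖u12p n‖) ∧
          ∀ t : ℝ,
            U t 0 0 =
              Complex.exp (-Complex.I * (Ω : ℂ) * (t : ℂ)) *
                (∑' n : ℤ, u11m n * Complex.exp (Complex.I * (n : ℂ) * (ω : ℂ) * (t : ℂ)))
              + Complex.exp (Complex.I * (Ω : ℂ) * (t : ℂ)) *
                (∑' n : ℤ, u11p n * Complex.exp (Complex.I * (n : ℂ) * (ω : ℂ) * (t : ℂ))) ∧
            U t 0 1 =
              Complex.exp (-Complex.I * (Ω : ℂ) * (t : ℂ)) *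
                (∑' n : ℤ, u12m n * Complex.exp (Complex.I * (n : ℂ) * (ω : ℂ) * (t : ℂ)))
              + Complex.exp (Complex.I * (Ω : ℂ) * (t : ℂ)) *
                (∑' n : ℤ, u12p n * Complex.exp (Complex.I * (n : ℂ) * (ω : ℂ) * (t : ℂ))) ∧
            U t 1 0 = -(starRingEnd ℂ) (U t 0 1) ∧
            U t 1 1 = (starRingEnd ℂ) (U t 0 0) := by
  have hfcont : Continuous f := Complex.isometry_ofReal.isEmbedding.continuous_iff.2
    ((continuous_finsum_exp hFfin ω).congr fun t => (hf t).symm)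
  have hfper : Function.Periodic f (2 * π / ω) := fun t =>
    Complex.ofReal_injective (by simpa only [hf] using periodic_finsum_exp hω.ne' F t)
  refine ⟨1, one_pos, fun ε _ U hU₀ hU => ?_⟩
  have hprop : IsPropagator (fun t => -Complex.I • twoLevelHamiltonian ε (f t)) U :=
    .of_hasDerivAt_apply hU₀ (by simpa only [twoLevelHamiltonian, smul_mul_assoc] using hU)
  exact floquet_form_conditions_I_II_general hω
    ((continuous_twoLevelHamiltonian ε).comp hfcont) (hfper.comp (twoLevelHamiltonian ε))
    (fun t => isHermitian_twoLevelHamiltonian ε (f t))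
    (fun t => trace_twoLevelHamiltonian ε (f t)) hprop
end
end

section
/- Define the Bessel function of the first kind J : ℝ → ℝ → ℝ by the power series J(ν, x) = Σ_{k=0}^{∞} (−1)^k / (k! · Γ(k+ν+1)) · (x/2)^{2k+ν} for x > 0 (with the convention 1/Γ(z) = 0 when Γ(z) = 0, i.e., at nonpositive integer arguments of Γ). Then for every integer m ≥ 0 and every real x > 0: Σ_{k∈ℤ, k≠0} J(m+k, x)² / k = −J(m, x) · [ D₁(m, x) + (−1)^m · D₂(m, x) ], where D₁(m, x) is the derivative of ν ↦ J(ν, x) at ν = m, and D₂(m, x) is the derivative of ν ↦ J(−ν, x) at ν = m. Equivalently, Σ_{k≠0} J(m+k,x)²/k = J(m,x)·( −2·D₁(m,x) + π·Y_m(x) ), where π·Y_m(x) = D₁(m,x) − (−1)^m·D₂(m,x) defines the Bessel function of the second kind of integer order m. -/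
noncomputable section

/-- The Bessel function of the first kind of (real) order `ν`, defined for `x > 0` by the
power series `J(ν, x) = Σ_{k≥0} (−1)^k / (k!·Γ(k+ν+1)) · (x/2)^{2k+ν}`, where `(x/2)^{2k+ν}`
is the real power and `1/Γ` vanishes at the nonpositive-integer poles of `Γ`
(Mathlib's `Real.Gamma` is `0` there, and division by `0` is `0`). -/
def besselJ (ν x : ℝ) : ℝ :=
  ∑' k : ℕ, (-1 : ℝ) ^ k / ((Nat.factorial k : ℝ) * Real.Gamma ((k : ℝ) + ν + 1)) *
    (x / 2) ^ (2 * (k : ℝ) + ν)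

/-!
The entire function `C(N, z) = N! / (Γ(z + 1) Γ(N - z + 1))` interpolates the binomial coefficients
and satisfies Pascal's rule, hence Vandermonde's identity
`C(M + N, z) = ∑ i, C(N, i) C(M, z - i)`. This is used twice.

* For `M = N = k` it evaluates the Cauchy product of the series of `J_μ` and `J_{-μ}`:
  `J_μ(z) J_{-μ}(z) = ∑ k, c_k C(2k, k + μ)` with `c_k = (-1)^k (z/2)^{2k} / k!²`. At an integer
  `μ = n` the left-hand side is `(-1)^n J_n(z)²`.
* For `M = 0` it expands `C(N, ·)` in translates of `C(0, z) = sin(πz) / (πz)`, whose derivative at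
  an integer `n ≠ 0` is `(-1)^n / n`. Hence `∑_{l ≠ 0} C(N, n + l) (-1)^l / l` is minus the
  derivative of `C(N, ·)` at `n`.

Summing `c_k C(2k, k + m + l) (-1)^l / l` over `k` first and over `l` first therefore gives
`∑_{l ≠ 0} J_{m+l}(z)² / l = -(-1)^m d/dμ (J_μ(z) J_{-μ}(z))` at `μ = m`, and the product rule
concludes.
-/

open Complex Finset

/-- The binomial coefficient `C(N, z)` with its lower index interpolated to an entire function of
`z`. Mathlib's `Gamma` is `0` at its poles, so `Gamma⁻¹` is the entire function `1 / Γ`. -/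
def complexChoose (N : ℕ) (z : ℂ) : ℂ :=
  N.factorial * (Gamma (z + 1))⁻¹ * (Gamma (N - z + 1))⁻¹

lemma differentiable_inv_Gamma_comp {f : ℂ → ℂ} (hf : Differentiable ℂ f) :
    Differentiable ℂ fun z ↦ (Gamma (f z))⁻¹ :=
  differentiable_one_div_Gamma.comp hf

lemma differentiable_complexChoose (N : ℕ) : Differentiable ℂ (complexChoose N) :=
  ((differentiable_inv_Gamma_comp (by fun_prop)).const_mul _).mul
    (differentiable_inv_Gamma_comp (by fun_prop))

lemma complexChoose_sub (N : ℕ) (z : ℂ) : complexChoose N (N - z) = complexChoose N z := by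
  simp only [complexChoose, sub_sub_cancel]
  ring

lemma complexChoose_succ (N : ℕ) (z : ℂ) :
    complexChoose (N + 1) z = complexChoose N z + complexChoose N (z - 1) := by
  have upper := one_div_Gamma_eq_self_mul_one_div_Gamma_add_one (N - z + 1)
  have lower := one_div_Gamma_eq_self_mul_one_div_Gamma_add_one z
  simp only [complexChoose, Nat.factorial_succ, Nat.cast_mul, Nat.cast_succ, sub_add_cancel,
    show (N : ℂ) - (z - 1) + 1 = N - z + 1 + 1 by ring,
    show (N : ℂ) + 1 - z + 1 = N - z + 1 + 1 by ring, upper, lower]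
  ring

theorem complexChoose_add (M N : ℕ) (z : ℂ) :
    complexChoose (M + N) z =
      ∑ ij ∈ antidiagonal N, (N.choose ij.1 : ℂ) * complexChoose M (z - ij.1) := by
  induction N generalizing z with
  | zero => simp
  | succ N ih =>
    rw [sum_antidiagonal_choose_succ_mul fun i _ ↦ complexChoose M (z - i), ← add_assoc,
      complexChoose_succ, ih, ih]
    congr 1
    refine sum_congr rfl fun ij hij ↦ ?_
    rw [Nat.choose_symm_of_eq_add (mem_antidiagonal.mp hij).symm, Nat.cast_succ, sub_sub,
      add_comm 1]

lemma complexChoose_negSucc (N n : ℕ) : complexChoose N (Int.negSucc n : ℤ) = 0 := by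
  simp [complexChoose, Int.negSucc_eq, Gamma_neg_nat_eq_zero]

lemma complexChoose_natCast (N n : ℕ) : complexChoose N n = N.choose n := by
  induction N generalizing n with
  | zero =>
    cases n with
    | zero => simp [complexChoose]
    | succ n => simp [complexChoose, Gamma_neg_nat_eq_zero]
  | succ N ih =>
    cases n with
    | zero =>
      have h := complexChoose_negSucc N 0
      rw [Int.cast_negSucc, zero_add, Nat.cast_one] at h
      rw [complexChoose_succ, ih, Nat.cast_zero, zero_sub, h]
      simp
    | succ n =>
      rw [complexChoose_succ, ih, Nat.cast_succ, add_sub_cancel_right, ih, Nat.choose_succ_succ',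
        Nat.cast_add, add_comm]

theorem hasSum_complexChoose_mul (N : ℕ) (φ : ℤ → ℂ) :
    HasSum (fun n : ℤ ↦ complexChoose N n * φ n)
      (∑ ij ∈ antidiagonal N, (N.choose ij.1 : ℂ) * φ ij.1) := by
  have vanish : ∀ n : ℤ, n ∉ Set.range ((↑) : ℕ → ℤ) → complexChoose N n * φ n = 0 := by
    rintro (n | n) hn
    · exact absurd ⟨n, rfl⟩ hn
    · rw [complexChoose_negSucc, zero_mul]
  rw [← Nat.cast_injective.hasSum_iff vanish,
    Nat.sum_antidiagonal_eq_sum_range_succ_mk]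
  simp only [Function.comp_def, Int.cast_natCast, complexChoose_natCast]
  refine hasSum_sum_of_ne_finset_zero fun n hn ↦ ?_
  rw [Nat.choose_eq_zero_of_lt (by simpa using hn), Nat.cast_zero, zero_mul]

lemma norm_complexChoose_intCast (N : ℕ) (n : ℤ) :
    (‖complexChoose N n‖ : ℂ) = complexChoose N n := by
  cases n with
  | ofNat n => simp [complexChoose_natCast]
  | negSucc n => simp only [complexChoose_negSucc, norm_zero, ofReal_zero]

lemma hasSum_norm_complexChoose (N : ℕ) :
    HasSum (fun n : ℤ ↦ ‖complexChoose N n‖) (2 ^ N) := by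
  have total : ∑ ij ∈ antidiagonal N, (N.choose ij.1 : ℂ) * 1 = ((2 ^ N : ℝ) : ℂ) := by
    rw [Nat.sum_antidiagonal_eq_sum_range_succ_mk]
    simp only [mul_one]
    exact_mod_cast Nat.sum_range_choose N
  rw [← hasSum_ofReal, ← total]
  simpa only [norm_complexChoose_intCast, mul_one] using hasSum_complexChoose_mul N fun _ ↦ 1

lemma pi_mul_self_mul_complexChoose_zero (z : ℂ) :
    Real.pi * z * complexChoose 0 z = sin (Real.pi * z) := by
  have reflection := congrArg (·⁻¹) (Gamma_mul_Gamma_one_sub z)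
  simp only [mul_inv, inv_div, one_div_Gamma_eq_self_mul_one_div_Gamma_add_one z] at reflection
  rw [eq_div_iff (ofReal_ne_zero.mpr Real.pi_ne_zero)] at reflection
  rw [← reflection, complexChoose, Nat.factorial_zero, Nat.cast_zero, Nat.cast_one,
    show (0 : ℂ) - z + 1 = 1 - z by ring]
  ring

lemma deriv_complexChoose_zero_zero : deriv (complexChoose 0) 0 = 0 := by
  have even : (fun z ↦ complexChoose 0 (-z)) = complexChoose 0 :=
    funext fun z ↦ by simpa using complexChoose_sub 0 z
  have h := deriv_comp_neg (complexChoose 0) 0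
  rw [even, neg_zero] at h
  exact self_eq_neg.mp h

-- At `n = 0` the right-hand side is the junk value `1 / 0 = 0`, which is the correct derivative.
theorem deriv_complexChoose_zero_intCast (n : ℤ) :
    deriv (complexChoose 0) n = (-1) ^ n / n := by
  rcases eq_or_ne n 0 with rfl | hn
  · simpa using deriv_complexChoose_zero_zero
  have hn' : (n : ℂ) ≠ 0 := Int.cast_ne_zero.mpr hn
  have hpi : (Real.pi : ℂ) ≠ 0 := ofReal_ne_zero.mpr Real.pi_ne_zero
  have value : complexChoose 0 n = 0 := by
    have h := pi_mul_self_mul_complexChoose_zero n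
    rw [mul_comm (Real.pi : ℂ), sin_int_mul_pi] at h
    simpa [hn', hpi] using h
  have cos_value : cos (Real.pi * n) = (-1) ^ n := by
    rw [mul_comm]
    simpa using congrArg ofReal (Real.cos_int_mul_pi n)
  have linear : HasDerivAt (fun z : ℂ ↦ Real.pi * z) Real.pi n := by
    simpa using (hasDerivAt_id (n : ℂ)).const_mul (Real.pi : ℂ)
  have lhs := linear.mul (differentiable_complexChoose 0 n).hasDerivAt
  have rhs := linear.csin
  rw [cos_value, ← funext pi_mul_self_mul_complexChoose_zero] at rhs
  have h := lhs.unique rhs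
  rw [value, mul_zero, zero_add] at h
  rw [eq_div_iff hn']
  apply mul_left_cancel₀ hpi
  linear_combination h

theorem hasSum_deriv_complexChoose (N : ℕ) (n : ℤ) :
    HasSum (fun l : ℤ ↦ complexChoose N (n + l) * ((-1) ^ l / l))
      (-deriv (complexChoose N) n) := by
  have deriv_eq : deriv (complexChoose N) n =
      ∑ ij ∈ antidiagonal N, (N.choose ij.1 : ℂ) * ((-1) ^ (n - ij.1) / ((n - ij.1 : ℤ) : ℂ)) := by
    rw [← zero_add N, funext (complexChoose_add 0 N), zero_add, deriv_fun_sum]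
    · refine sum_congr rfl fun ij _ ↦ ?_
      rw [deriv_const_mul_field, deriv_comp_sub_const, ← deriv_complexChoose_zero_intCast]
      push_cast
      rfl
    · exact fun ij _ ↦ (((differentiable_complexChoose 0).comp
        (differentiable_id.sub_const _)).const_mul _).differentiableAt
  have h := (hasSum_complexChoose_mul N fun p ↦ (-1) ^ (n - p) / ((n - p : ℤ) : ℂ)).neg
  rw [← deriv_eq, ← (Equiv.addLeft n).hasSum_iff] at h
  refine h.congr_fun fun l ↦ ?_
  simp [div_neg, ← inv_zpow]

lemma norm_inv_Gamma_add_one_le {s : ℂ} (hs : 1 ≤ ‖s‖) :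
    ‖(Gamma (s + 1))⁻¹‖ ≤ ‖(Gamma s)⁻¹‖ := by
  rw [one_div_Gamma_eq_self_mul_one_div_Gamma_add_one s, norm_mul]
  exact le_mul_of_one_le_left (norm_nonneg _) hs

theorem exists_norm_inv_Gamma_add_natCast_le {K : Set ℂ} (hK : IsCompact K) :
    ∃ M, ∀ k : ℕ, ∀ s ∈ K, ‖(Gamma (s + k))⁻¹‖ ≤ M := by
  obtain ⟨R, hR⟩ := hK.isBounded.exists_norm_le
  set N := ⌈R⌉₊ + 1
  have antitone_from_N : ∀ k ≥ N, ∀ s ∈ K, ‖(Gamma (s + k))⁻¹‖ ≤ ‖(Gamma (s + N))⁻¹‖ := by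
    intro k hk s hs
    induction k, hk using Nat.le_induction with
    | base => rfl
    | succ k hk ih =>
      refine le_trans ?_ ih
      rw [Nat.cast_succ, ← add_assoc]
      apply norm_inv_Gamma_add_one_le
      have hRk : R + 1 ≤ k := by
        calc R + 1 ≤ ⌈R⌉₊ + 1 := by gcongr; exact Nat.le_ceil R
          _ ≤ k := mod_cast hk
      have htri : (k : ℝ) - ‖s‖ ≤ ‖s + k‖ := by
        simpa [add_comm] using norm_sub_le_norm_add (k : ℂ) s
      linarith [hR s hs]
  have hcont : Continuous fun s : ℂ ↦ ∑ k ∈ range (N + 1), ‖(Gamma (s + k))⁻¹‖ :=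
    continuous_finsetSum _ fun k _ ↦
      (differentiable_inv_Gamma_comp (differentiable_id.add_const _)).continuous.norm
  obtain ⟨M, hM⟩ := hK.exists_bound_of_continuousOn hcont.continuousOn
  have initial_le : ∀ k ≤ N, ∀ s ∈ K, ‖(Gamma (s + k))⁻¹‖ ≤ M := fun k hk s hs ↦
    (single_le_sum (f := fun k : ℕ ↦ ‖(Gamma (s + k))⁻¹‖) (fun _ _ ↦ norm_nonneg _)
      (mem_range_succ_iff.mpr hk)).trans ((Real.le_norm_self _).trans (hM s hs))
  refine ⟨M, fun k s hs ↦ (le_total k N).elim (initial_le k · s hs) fun hk ↦ ?_⟩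
  exact (antitone_from_N k hk s hs).trans (initial_le N le_rfl s hs)

/-- The `k`-th term of the power series of the Bessel function `J_ν(z)`, with the principal branch
of `(z / 2) ^ (2 * k + ν)`. -/
def besselTerm (ν z : ℂ) (k : ℕ) : ℂ :=
  (-1) ^ k / (k.factorial * Gamma (k + ν + 1)) * (z / 2) ^ (2 * k + ν)

/-- The Bessel function of the first kind `J_ν(z)` of complex order and argument, with the branch
of `besselTerm`; it extends `besselJ` and makes the order a complex-analytic variable. -/
def complexBesselJ (ν z : ℂ) : ℂ :=
  ∑' k : ℕ, besselTerm ν z k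

section Bessel

variable {z : ℂ}

lemma besselTerm_eq (hz : z ≠ 0) (ν : ℂ) (k : ℕ) :
    besselTerm ν z k =
      (-1) ^ k * (z / 2) ^ (2 * k) * (z / 2) ^ ν * (k.factorial : ℂ)⁻¹ *
        (Gamma (k + ν + 1))⁻¹ := by
  rw [besselTerm, cpow_add _ _ (div_ne_zero hz two_ne_zero), div_eq_mul_inv, mul_inv,
    ← Nat.cast_two, ← Nat.cast_mul, cpow_natCast]
  ring

lemma differentiable_besselTerm (hz : z ≠ 0) (k : ℕ) :
    Differentiable ℂ fun ν ↦ besselTerm ν z k := by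
  have hpow : Differentiable ℂ fun ν : ℂ ↦ (z / 2) ^ ν := fun ν ↦
    differentiableAt_id.const_cpow (.inl (div_ne_zero hz two_ne_zero))
  simp only [besselTerm_eq hz]
  exact ((hpow.const_mul _).mul_const _).mul (differentiable_inv_Gamma_comp (by fun_prop))

lemma exists_summable_norm_besselTerm_le (hz : z ≠ 0) {K : Set ℂ} (hK : IsCompact K) :
    ∃ u : ℕ → ℝ, Summable u ∧ ∀ k, ∀ ν ∈ K, ‖besselTerm ν z k‖ ≤ u k := by
  obtain ⟨M, hM⟩ :=
    exists_norm_inv_Gamma_add_natCast_le (hK.image (continuous_add_const (1 : ℂ)))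
  obtain ⟨C, hC⟩ := hK.exists_bound_of_continuousOn
    (continuous_id.const_cpow (.inl (div_ne_zero hz two_ne_zero))).continuousOn
  refine ⟨fun k ↦ (‖z / 2‖ ^ 2) ^ k / k.factorial * (C * M),
    (Real.summable_pow_div_factorial _).mul_right _, fun k ν hν ↦ ?_⟩
  have hΓ : ‖(Gamma (k + ν + 1))⁻¹‖ ≤ M := by
    simpa only [add_comm (k : ℂ), add_right_comm] using hM k (ν + 1) ⟨ν, hν, rfl⟩
  have hpow : ‖(z / 2) ^ ν‖ ≤ C := hC ν hν
  have hC0 : 0 ≤ C := (norm_nonneg _).trans hpow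
  calc ‖besselTerm ν z k‖
      = (‖z / 2‖ ^ 2) ^ k / k.factorial * (‖(z / 2) ^ ν‖ * ‖(Gamma (k + ν + 1))⁻¹‖) := by
        rw [besselTerm_eq hz]
        simp only [norm_mul, norm_pow, norm_neg, norm_one, one_pow, one_mul, pow_mul,
          norm_inv (k.factorial : ℂ), Complex.norm_natCast]
        ring
    _ ≤ (‖z / 2‖ ^ 2) ^ k / k.factorial * (C * M) := by gcongr

lemma summable_norm_besselTerm (hz : z ≠ 0) (ν : ℂ) : Summable fun k ↦ ‖besselTerm ν z k‖ := by
  obtain ⟨u, hu, hle⟩ := exists_summable_norm_besselTerm_le hz (isCompact_singleton (x := ν))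
  exact hu.of_nonneg_of_le (fun _ ↦ norm_nonneg _) fun k ↦ hle k ν rfl

theorem differentiable_complexBesselJ (hz : z ≠ 0) : Differentiable ℂ (complexBesselJ · z) := by
  intro ν
  obtain ⟨u, hu, hle⟩ := exists_summable_norm_besselTerm_le hz (isCompact_closedBall ν 1)
  have hdiff := differentiableOn_tsum_of_summable_norm hu
    (fun k ↦ (differentiable_besselTerm hz k).differentiableOn) Metric.isOpen_ball
    fun k w hw ↦ hle k w (Metric.ball_subset_closedBall hw)
  exact hdiff.differentiableAt (Metric.ball_mem_nhds ν one_pos)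

lemma besselTerm_neg_natCast_add (hz : z ≠ 0) (n k : ℕ) :
    besselTerm (-n) z (k + n) = (-1) ^ n * besselTerm n z k := by
  have hz2 : z / 2 ≠ 0 := div_ne_zero hz two_ne_zero
  rw [besselTerm_eq hz, besselTerm_eq hz,
    show ((k + n : ℕ) : ℂ) + -n + 1 = k + 1 by push_cast; ring,
    show (k : ℂ) + n + 1 = (k + n : ℕ) + 1 by push_cast; ring,
    Gamma_nat_eq_factorial, Gamma_nat_eq_factorial, cpow_neg, cpow_natCast,
    show 2 * (k + n) = 2 * k + n + n by ring, pow_add, pow_add, pow_add]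
  field_simp

lemma besselTerm_neg_natCast_of_lt (z : ℂ) {n k : ℕ} (hk : k < n) : besselTerm (-n) z k = 0 := by
  obtain ⟨d, rfl⟩ := Nat.exists_eq_add_of_lt hk
  rw [besselTerm, show (k : ℂ) + -(k + d + 1 : ℕ) + 1 = -d by push_cast; ring,
    Gamma_neg_nat_eq_zero, mul_zero, div_zero, zero_mul]

lemma complexBesselJ_neg_natCast (hz : z ≠ 0) (n : ℕ) :
    complexBesselJ (-n) z = (-1) ^ n * complexBesselJ n z := by
  rw [complexBesselJ, ← (summable_norm_besselTerm hz _).of_norm.sum_add_tsum_nat_add n,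
    sum_eq_zero fun k hk ↦ besselTerm_neg_natCast_of_lt z (mem_range.mp hk), zero_add,
    complexBesselJ, ← tsum_mul_left]
  exact tsum_congr (besselTerm_neg_natCast_add hz n)

theorem complexBesselJ_neg_intCast (hz : z ≠ 0) (n : ℤ) :
    complexBesselJ (-n) z = (-1) ^ n * complexBesselJ n z := by
  obtain ⟨k, rfl | rfl⟩ := n.eq_nat_or_neg
  · exact_mod_cast complexBesselJ_neg_natCast hz k
  · rw [Int.cast_neg, Int.cast_natCast, complexBesselJ_neg_natCast hz, neg_neg, zpow_neg,
      zpow_natCast, inv_mul_cancel_left₀ (pow_ne_zero _ (neg_ne_zero.mpr one_ne_zero))]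

/-- The coefficient `c_k` in the expansion `J_μ(z) J_{-μ}(z) = ∑ k, c_k C(2k, k + μ)`. -/
def besselProductCoeff (z : ℂ) (k : ℕ) : ℂ :=
  (-1) ^ k * (z / 2) ^ (2 * k) / (k.factorial : ℂ) ^ 2

lemma besselTerm_mul_besselTerm_neg (hz : z ≠ 0) (μ : ℂ) (i j : ℕ) :
    besselTerm μ z j * besselTerm (-μ) z i = besselProductCoeff z (i + j) *
      ((i + j).choose i * complexChoose (i + j) ((i + j : ℕ) + μ - i)) := by
  have hpow : (z / 2) ^ μ * (z / 2) ^ (-μ) = 1 := by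
    rw [← cpow_add _ _ (div_ne_zero hz two_ne_zero), add_neg_cancel, cpow_zero]
  have hchoose : ((i + j).choose i / (i + j).factorial : ℂ) =
      (i.factorial : ℂ)⁻¹ * (j.factorial : ℂ)⁻¹ := by
    rw [Nat.cast_add_choose, div_div, mul_comm (_ * _ : ℂ), ← div_div,
      div_self (mod_cast (i + j).factorial_ne_zero), one_div, mul_inv]
  have hlower : ((i + j : ℕ) : ℂ) + μ - i = j + μ := by
    push_cast
    ring
  have hupper : ((i + j : ℕ) : ℂ) - (j + μ) + 1 = i + -μ + 1 := by
    push_cast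
    ring
  rw [besselTerm_eq hz, besselTerm_eq hz, besselProductCoeff, complexChoose, hlower, hupper]
  calc _ = (-1) ^ (i + j) * (z / 2) ^ (2 * (i + j)) * ((z / 2) ^ μ * (z / 2) ^ (-μ)) *
        ((i.factorial : ℂ)⁻¹ * (j.factorial : ℂ)⁻¹) *
          ((Gamma (j + μ + 1))⁻¹ * (Gamma (i + -μ + 1))⁻¹) := by ring
    _ = _ := by
      have hfact : ((i + j).factorial : ℂ) ≠ 0 := mod_cast (i + j).factorial_ne_zero
      rw [hpow, ← hchoose]
      field_simp

theorem sum_antidiagonal_besselTerm_mul (hz : z ≠ 0) (μ : ℂ) (k : ℕ) :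
    ∑ ij ∈ antidiagonal k, besselTerm μ z ij.1 * besselTerm (-μ) z ij.2 =
      besselProductCoeff z k * complexChoose (2 * k) (k + μ) := by
  rw [two_mul, complexChoose_add, ← Nat.sum_antidiagonal_swap, mul_sum]
  refine sum_congr rfl fun ⟨i, j⟩ hij ↦ ?_
  obtain rfl : i + j = k := mem_antidiagonal.mp hij
  exact besselTerm_mul_besselTerm_neg hz μ i j

theorem hasSum_complexBesselJ_mul_neg (hz : z ≠ 0) (μ : ℂ) :
    HasSum (fun k ↦ besselProductCoeff z k * complexChoose (2 * k) (k + μ))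
      (complexBesselJ μ z * complexBesselJ (-μ) z) := by
  have hμ := summable_norm_besselTerm hz μ
  have hμ' := summable_norm_besselTerm hz (-μ)
  rw [complexBesselJ, complexBesselJ,
    tsum_mul_tsum_eq_tsum_sum_antidiagonal_of_summable_norm hμ hμ']
  simp only [← sum_antidiagonal_besselTerm_mul hz]
  exact (summable_norm_sum_mul_antidiagonal_of_summable_norm hμ hμ').of_norm.hasSum

theorem hasSum_complexBesselJ_intCast_sq (hz : z ≠ 0) (n : ℤ) :
    HasSum (fun k ↦ besselProductCoeff z k * complexChoose (2 * k) (k + n))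
      ((-1) ^ n * complexBesselJ n z ^ 2) := by
  have h := hasSum_complexBesselJ_mul_neg hz n
  rwa [complexBesselJ_neg_intCast hz, mul_left_comm, ← sq] at h

theorem hasSum_deriv_complexBesselJ_mul_neg (hz : z ≠ 0) (μ : ℂ) :
    HasSum (fun k : ℕ ↦ besselProductCoeff z k * deriv (complexChoose (2 * k)) (k + μ))
      (deriv (fun ν ↦ complexBesselJ ν z * complexBesselJ (-ν) z) μ) := by
  obtain ⟨u, hu, hle⟩ :=
    exists_summable_norm_besselTerm_le hz (isCompact_closedBall (0 : ℂ) (‖μ‖ + 1))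
  have hu_nonneg : ∀ k, 0 ≤ u k := fun k ↦
    (norm_nonneg _).trans (hle k 0 (Metric.mem_closedBall_self (by positivity)))
  have hbound : ∀ k, ∀ ν ∈ Metric.ball (0 : ℂ) (‖μ‖ + 1),
      ‖besselProductCoeff z k * complexChoose (2 * k) (k + ν)‖ ≤
        ∑ ij ∈ antidiagonal k, u ij.1 * u ij.2 := by
    intro k ν hν
    have hmem := Metric.ball_subset_closedBall hν
    rw [← sum_antidiagonal_besselTerm_mul hz]
    refine norm_sum_le_of_le _ fun ij _ ↦ (norm_mul_le _ _).trans ?_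
    exact mul_le_mul (hle _ _ hmem) (hle _ _ (by simpa using hmem)) (norm_nonneg _) (hu_nonneg _)
  have h := hasSum_deriv_of_summable_norm
    (F := fun k ν ↦ besselProductCoeff z k * complexChoose (2 * k) (k + ν))
    (summable_norm_sum_mul_antidiagonal_of_summable_norm hu.norm hu.norm).of_norm
    (fun k ↦ (((differentiable_complexChoose (2 * k)).comp
      (differentiable_id.const_add (k : ℂ))).const_mul _).differentiableOn)
    Metric.isOpen_ball hbound (by simp : μ ∈ Metric.ball (0 : ℂ) (‖μ‖ + 1))
  simp only [(hasSum_complexBesselJ_mul_neg hz _).tsum_eq] at h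
  refine h.congr_fun fun k ↦ ?_
  rw [deriv_const_mul_field, deriv_comp_const_add]

lemma summable_norm_besselProductCoeff_mul_four_pow (z : ℂ) :
    Summable fun k ↦ ‖besselProductCoeff z k‖ * 4 ^ k := by
  refine (Real.summable_pow_div_factorial (‖z‖ ^ 2)).of_nonneg_of_le
    (fun k ↦ by positivity) fun k ↦ ?_
  have hfact : (1 : ℝ) ≤ k.factorial := mod_cast k.factorial_pos
  have hpow : (‖z‖ / 2) ^ (2 * k) * 4 ^ k = (‖z‖ ^ 2) ^ k := by
    rw [pow_mul, ← mul_pow]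
    ring
  calc ‖besselProductCoeff z k‖ * 4 ^ k
      = (‖z‖ ^ 2) ^ k / (k.factorial : ℝ) ^ 2 := by
        rw [← hpow]
        simp only [besselProductCoeff, norm_div, norm_mul, norm_pow, norm_neg, norm_one, one_pow,
          one_mul, Complex.norm_ofNat, Complex.norm_natCast]
        ring
    _ ≤ (‖z‖ ^ 2) ^ k / k.factorial := by
        gcongr
        exact le_self_pow₀ hfact two_ne_zero

lemma neg_one_zpow_mul_self (n : ℤ) : (-1 : ℂ) ^ n * (-1) ^ n = 1 := by
  rw [← mul_zpow, neg_one_mul, neg_neg, one_zpow]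

lemma norm_neg_one_zpow_div_le_one (l : ℤ) : ‖((-1) ^ l / l : ℂ)‖ ≤ 1 := by
  rcases eq_or_ne l 0 with rfl | hl
  · simp
  rw [norm_div, norm_zpow, norm_neg, norm_one, one_zpow, norm_intCast]
  exact div_le_one_of_le₀ (mod_cast Int.one_le_abs hl) (abs_nonneg _)

lemma summable_besselProductCoeff_mul_complexChoose (z : ℂ) (m : ℤ) :
    Summable fun p : ℕ × ℤ ↦ besselProductCoeff z p.1 *
      (complexChoose (2 * p.1) (p.1 + m + p.2) * ((-1) ^ p.2 / p.2)) := by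
  have row : ∀ k : ℕ, HasSum (fun l : ℤ ↦ ‖besselProductCoeff z k‖ *
      ‖complexChoose (2 * k) ((k + m + l : ℤ) : ℂ)‖) (‖besselProductCoeff z k‖ * 4 ^ k) := by
    intro k
    have h := (Equiv.addLeft (k + m : ℤ)).hasSum_iff.mpr (hasSum_norm_complexChoose (2 * k))
    rw [pow_mul, show (2 : ℝ) ^ 2 = 4 by norm_num] at h
    exact h.mul_left _
  refine .of_norm_bounded (g := fun p ↦ ‖besselProductCoeff z p.1‖ *
      ‖complexChoose (2 * p.1) ((p.1 + m + p.2 : ℤ) : ℂ)‖) ?_ fun p ↦ ?_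
  · refine (summable_prod_of_nonneg fun p ↦ by positivity).mpr
      ⟨fun k ↦ (row k).summable, ?_⟩
    simpa only [(row _).tsum_eq] using summable_norm_besselProductCoeff_mul_four_pow z
  · push_cast
    rw [norm_mul, norm_mul]
    gcongr
    exact mul_le_of_le_one_right (norm_nonneg _) (norm_neg_one_zpow_div_le_one p.2)

-- Division by zero makes the `l = 0` term vanish, so this is a sum over `l ≠ 0`.
theorem hasSum_complexBesselJ_sq_div (hz : z ≠ 0) (m : ℤ) :
    HasSum (fun l : ℤ ↦ complexBesselJ (m + l) z ^ 2 / l)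
      (-(-1) ^ m * deriv (fun ν ↦ complexBesselJ ν z * complexBesselJ (-ν) z) m) := by
  have hsum := (summable_besselProductCoeff_mul_complexChoose z m).hasSum
  have rows := hsum.prod_fiberwise (g := fun k ↦
      -(besselProductCoeff z k * deriv (complexChoose (2 * k)) (k + m))) fun k ↦ by
    simpa using (hasSum_deriv_complexChoose (2 * k) (k + m)).mul_left (besselProductCoeff z k)
  have columns := ((Equiv.prodComm ℤ ℕ).hasSum_iff.mpr hsum).prod_fiberwise (g := fun l ↦
      (-1) ^ (m + l) * complexBesselJ (m + l) z ^ 2 * ((-1) ^ l / l)) fun l ↦ by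
    simpa [add_assoc, mul_assoc] using
      (hasSum_complexBesselJ_intCast_sq hz (m + l)).mul_right ((-1) ^ l / l : ℂ)
  rw [rows.unique (hasSum_deriv_complexBesselJ_mul_neg hz m).neg] at columns
  have h := columns.mul_left ((-1) ^ m)
  rw [mul_neg, ← neg_mul] at h
  refine h.congr_fun fun l ↦ ?_
  rw [zpow_add₀ (neg_ne_zero.mpr one_ne_zero)]
  linear_combination (-(complexBesselJ (m + l) z ^ 2 / l) * (-1) ^ l * (-1) ^ l) *
    neg_one_zpow_mul_self m - (complexBesselJ (m + l) z ^ 2 / l) * neg_one_zpow_mul_self l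

lemma deriv_complexBesselJ_mul_neg (hz : z ≠ 0) (m : ℤ) :
    -(-1) ^ m * deriv (fun ν ↦ complexBesselJ ν z * complexBesselJ (-ν) z) m =
      -complexBesselJ m z * (deriv (complexBesselJ · z) m +
        (-1) ^ m * deriv (fun ν ↦ complexBesselJ (-ν) z) m) := by
  have hdiff := differentiable_complexBesselJ hz
  have hdiff_neg : Differentiable ℂ fun ν ↦ complexBesselJ (-ν) z :=
    hdiff.comp differentiable_neg
  rw [deriv_fun_mul (hdiff m) (hdiff_neg m), complexBesselJ_neg_intCast hz]
  linear_combination (-deriv (complexBesselJ · z) m * complexBesselJ m z) * neg_one_zpow_mul_self m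

end Bessel

lemma deriv_ofReal_eq {f : ℝ → ℝ} {g : ℂ → ℂ} {t : ℝ} (hg : DifferentiableAt ℂ g t)
    (hfg : ∀ s : ℝ, g s = f s) : deriv g t = deriv f t := by
  have hf : DifferentiableAt ℝ f t := by
    simpa [hfg] using hg.hasDerivAt.real_of_complex.differentiableAt
  have h := hg.hasDerivAt.comp_ofReal
  simp only [hfg] at h
  exact h.unique hf.hasDerivAt.ofReal_comp

lemma complexBesselJ_ofReal (ν : ℝ) {x : ℝ} (hx : 0 ≤ x) :
    complexBesselJ ν x = besselJ ν x := by
  rw [complexBesselJ, besselJ, ofReal_tsum]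
  refine tsum_congr fun k ↦ ?_
  rw [besselTerm]
  push_cast [ofReal_cpow (by positivity : 0 ≤ x / 2), ← Gamma_ofReal]
  rfl

theorem bessel_sum_identity_general (m : ℤ) {x : ℝ} (hx : 0 < x) :
    HasSum (fun k : ℤ ↦ if k = 0 then (0 : ℝ) else besselJ (m + k) x ^ 2 / k)
      (-besselJ m x * (deriv (fun ν ↦ besselJ ν x) m +
        (-1) ^ m * deriv (fun ν ↦ besselJ (-ν) x) m)) := by
  have hx' : (x : ℂ) ≠ 0 := ofReal_ne_zero.mpr hx.ne'
  have hJ : ∀ ν : ℝ, complexBesselJ ν x = besselJ ν x := fun ν ↦ complexBesselJ_ofReal ν hx.le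
  have hdiff := differentiable_complexBesselJ hx'
  have hderiv := deriv_ofReal_eq (hdiff (m : ℝ)) hJ
  have hderiv_neg : deriv (fun ν ↦ complexBesselJ (-ν) x) (m : ℝ) =
      deriv (fun ν ↦ besselJ (-ν) x) m :=
    deriv_ofReal_eq (hdiff.comp differentiable_neg (m : ℝ)) fun ν ↦ by simpa using hJ (-ν)
  have h := hasSum_complexBesselJ_sq_div hx' m
  rw [deriv_complexBesselJ_mul_neg hx', ← ofReal_intCast, hderiv, hderiv_neg, hJ] at h
  rw [← hasSum_ofReal]
  push_cast
  refine h.congr_fun fun k ↦ ?_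
  have hJk : complexBesselJ ((m : ℝ) + k) x = besselJ (m + k) x := mod_cast hJ (m + k)
  rw [hJk]
  split_ifs with hk <;> simp [hk]

theorem bessel_sum_identity (m : ℕ) (x : ℝ) (hx : 0 < x) :
    (∑' k : ℤ, if k = 0 then (0 : ℝ) else besselJ ((m : ℝ) + (k : ℝ)) x ^ 2 / (k : ℝ))
      = -besselJ (m : ℝ) x *
        (deriv (fun ν : ℝ => besselJ ν x) (m : ℝ)
          + (-1 : ℝ) ^ m * deriv (fun ν : ℝ => besselJ (-ν) x) (m : ℝ)) := by
  simpa using (bessel_sum_identity_general m hx).tsum_eq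
end
end
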